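/- Let k be a commutative ring with unity, N ≥ 2 an integer, and q ∈ k a primitive N-th root of unity. Let U = (U^i)_{i∈ℤ} and V = (V^i)_{i∈ℤ} be ℤ-graded k-modules equipped with degree-1 k-linear maps d_U : U^i → U^{i+1} and d_V : V^i → V^{i+1}. Let U⊗^{•q}V be the graded k-module with (U⊗^{•q}V)^n = ⊕_{r+s=n} U^r ⊗_k V^s and degree-1 differential d determined on pure tensors by d(u⊗v) = d_U(u)⊗v + q^r·u⊗d_V(v) for u ∈ U^r. Then for every integer n with 1 ≤ n ≤ N, every s ∈ ℤ, every u ∈ U^s and every homogeneous v ∈ V: d^{(n)}(u⊗v) = Σ_{l=0}^{n} q^{ls} · [n choose l] · d_U^{(n−l)}(u) ⊗ d_V^{(l)}(v), where d^{(i)} denotes the i-fold iterate of the corresponding differential (and d^{(0)} = id). -/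

import Mathlib

/-!
On `U ⊗ V` the differential is `a + b` with `a = d_U ⊗ 1` and `b = q^deg ⊗ d_V`. Applying `a` first
raises the degree of the left factor by one, which costs `b` a factor `q`: so `b a = q a b`, and
`(a + b)^n` is given by the noncommutative `q`-binomial theorem. The powers of `a` and `b` are
immediate on pure tensors. The factorial formula identifies the coefficient with any solution of
`[l]! [m-l]! c = [m]!`, since `[m]!` is a non-zero-divisor for `m < N`.
-/

open scoped TensorProduct DirectSum

/-- The `q`-integer `[m] = 1 + q + ⋯ + q^{m-1}`. -/
def qInt {k : Type*} [CommRing k] (q : k) (m : ℕ) : k := ∑ i ∈ Finset.range m, q ^ i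

/-- The `q`-factorial `[m]! = [m][m-1]⋯[1]`, with `[0]! = 1`. -/
def qFact {k : Type*} [CommRing k] (q : k) (m : ℕ) : k := ∏ i ∈ Finset.range m, qInt q (i + 1)

/-- `QBinomSpec q N m l c` says that `c` is *the* `q`-binomial coefficient `[m choose l]`
(for `0 ≤ l ≤ m ≤ N`): in the special cases `(l,m) = (0,N), (N,N)` it is `1` by convention,
and otherwise it is characterized by `[l]! ⬝ [m-l]! ⬝ c = [m]!`. -/
def QBinomSpec {k : Type*} [CommRing k] (q : k) (N m l : ℕ) (c : k) : Prop :=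
  ((m = N ∧ (l = 0 ∨ l = N)) → c = 1) ∧
  (¬(m = N ∧ (l = 0 ∨ l = N)) → qFact q l * qFact q (m - l) * c = qFact q m)

/-- Transport a graded component along an equality of degrees. -/
def castLM {k : Type*} [CommRing k] {X : ℤ → Type*} [∀ i, AddCommGroup (X i)]
    [∀ i, Module k (X i)] {i j : ℤ} (h : i = j) : X i →ₗ[k] X j := by
  subst h; exact LinearMap.id

/-- The `l`-fold iterate `d^{(l),i} : X^i → X^{i+l}` of a degree-1 family of maps. -/
def dpow {k : Type*} [CommRing k] {X : ℤ → Type*} [∀ i, AddCommGroup (X i)]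
    [∀ i, Module k (X i)] (d : ∀ i : ℤ, X i →ₗ[k] X (i + 1)) :
    (l : ℕ) → (i : ℤ) → (X i →ₗ[k] X (i + l))
  | 0, i => castLM (by simp)
  | l + 1, i => castLM (by push_cast; ring) ∘ₗ (dpow d l (i + 1)) ∘ₗ d i

/-- The differential of the twisted tensor product `U ⊗^{•q} V` on the bigraded
direct sum `⨁_{(r,s)} U^r ⊗ V^s`, given on the `(r,s)` component by
`u⊗v ↦ d_U(u)⊗v + q^r ⬝ u⊗d_V(v)` (here `q = ↑u` is a unit, so `q^r` makes sense). -/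
noncomputable def tensorDiff {k : Type*} [CommRing k] (u : kˣ)
    (U V : ℤ → Type*) [∀ i, AddCommGroup (U i)] [∀ i, Module k (U i)]
    [∀ i, AddCommGroup (V i)] [∀ i, Module k (V i)]
    (dU : ∀ i : ℤ, U i →ₗ[k] U (i + 1)) (dV : ∀ i : ℤ, V i →ₗ[k] V (i + 1)) :
    (⨁ p : ℤ × ℤ, U p.1 ⊗[k] V p.2) →ₗ[k] (⨁ p : ℤ × ℤ, U p.1 ⊗[k] V p.2) :=
  DirectSum.toModule k (ℤ × ℤ) _ (fun p =>
    ((DirectSum.lof k (ℤ × ℤ) (fun p : ℤ × ℤ => U p.1 ⊗[k] V p.2) (p.1 + 1, p.2)) ∘ₗ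
      (TensorProduct.map (dU p.1) LinearMap.id))
    + ((u ^ p.1 : kˣ) : k) •
      ((DirectSum.lof k (ℤ × ℤ) (fun p : ℤ × ℤ => U p.1 ⊗[k] V p.2) (p.1, p.2 + 1)) ∘ₗ
        (TensorProduct.map LinearMap.id (dV p.2))))

/-- The Gaussian binomial coefficient `[n choose l]` at `q`, defined by the `q`-Pascal recursion so
that it makes sense for every `q`, including those for which `q`-factorials are zero divisors. -/
def qBinom {k : Type*} [Semiring k] (q : k) : ℕ → ℕ → k
  | _, 0 => 1
  | 0, _ + 1 => 0
  | n + 1, l + 1 => q ^ (l + 1) * qBinom q n (l + 1) + qBinom q n l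

section Semiring

variable {k : Type*} [Semiring k] (q : k)

theorem qBinom_zero_right (n : ℕ) : qBinom q n 0 = 1 := by
  cases n <;> rfl

theorem qBinom_succ_succ (n l : ℕ) :
    qBinom q (n + 1) (l + 1) = q ^ (l + 1) * qBinom q n (l + 1) + qBinom q n l :=
  rfl

theorem qBinom_eq_zero_of_lt : ∀ {n l : ℕ}, n < l → qBinom q n l = 0
  | 0, _ + 1, _ => rfl
  | n + 1, l + 1, h => by
    rw [qBinom_succ_succ, qBinom_eq_zero_of_lt (by lia), qBinom_eq_zero_of_lt (by lia), mul_zero,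
      add_zero]

theorem qBinom_self (n : ℕ) : qBinom q n n = 1 := by
  induction n with
  | zero => rfl
  | succ n ih =>
    rw [qBinom_succ_succ, qBinom_eq_zero_of_lt q n.lt_succ_self, mul_zero, zero_add, ih]

end Semiring

section CommRing

variable {k : Type*} [CommRing k] (q : k)

theorem qInt_add (a b : ℕ) : qInt q (a + b) = qInt q a + q ^ a * qInt q b := by
  simp only [qInt, Finset.sum_range_add, pow_add, Finset.mul_sum]

theorem qFact_zero : qFact q 0 = 1 :=
  Finset.prod_range_zero _

theorem qFact_succ (n : ℕ) : qFact q (n + 1) = qFact q n * qInt q (n + 1) :=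
  Finset.prod_range_succ _ n

theorem qFact_mul_qFact_mul_qBinom (l m : ℕ) :
    qFact q l * qFact q m * qBinom q (l + m) l = qFact q (l + m) := by
  induction l generalizing m with
  | zero => rw [qFact_zero, qBinom_zero_right, zero_add, one_mul, mul_one]
  | succ l ihl =>
    induction m with
    | zero => rw [qFact_zero, add_zero, qBinom_self, mul_one, mul_one]
    | succ m ihm =>
      have pascal : qBinom q (l + 1 + (m + 1)) (l + 1) =
          q ^ (l + 1) * qBinom q (l + 1 + m) (l + 1) + qBinom q (l + (m + 1)) l := by
        rw [← add_assoc, qBinom_succ_succ, add_right_comm l 1 m, add_assoc l m 1]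
      have top : qFact q (l + 1 + (m + 1)) = qFact q (l + 1 + m) *
          (qInt q (l + 1) + q ^ (l + 1) * qInt q (m + 1)) := by
        rw [← qInt_add, ← add_assoc, qFact_succ]
      have hl := ihl (m + 1)
      rw [← add_assoc, add_right_comm] at hl
      rw [pascal, top, ← add_assoc, add_right_comm l m 1]
      rw [qFact_succ q l] at ihm ⊢
      rw [qFact_succ q m] at hl ⊢
      linear_combination q ^ (l + 1) * qInt q (m + 1) * ihm + qInt q (l + 1) * hl

variable {q}

theorem qFact_mem_nonZeroDivisors {m : ℕ}
    (hq : ∀ l : ℕ, 1 ≤ l → l ≤ m → q ^ l - 1 ∈ nonZeroDivisors k) :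
    qFact q m ∈ nonZeroDivisors k := by
  refine prod_mem fun i hi => ?_
  have h : qInt q (i + 1) * (q - 1) ∈ nonZeroDivisors k := by
    rw [qInt, geom_sum_mul]
    exact hq (i + 1) (by lia) (Finset.mem_range.1 hi)
  exact (mul_mem_nonZeroDivisors.1 h).1

theorem QBinomSpec.eq_qBinom {N m l : ℕ} {c : k} (hc : QBinomSpec q N m l c)
    (hq : ∀ j < N, qFact q j ∈ nonZeroDivisors k) (hm : m ≤ N) (hl : l ≤ m) :
    c = qBinom q m l := by
  by_cases h : m = N ∧ (l = 0 ∨ l = N)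
  · rw [hc.1 h]
    obtain ⟨rfl, rfl | rfl⟩ := h
    · exact (qBinom_zero_right q m).symm
    · exact (qBinom_self q l).symm
  · have hfact : qFact q l * qFact q (m - l) ∈ nonZeroDivisors k :=
      mul_mem (hq l (by lia)) (hq (m - l) (by lia))
    have hqBinom := qFact_mul_qFact_mul_qBinom q l (m - l)
    rw [Nat.add_sub_cancel' hl] at hqBinom
    exact (mul_cancel_left_mem_nonZeroDivisors hfact).1 ((hc.2 h).trans hqBinom.symm)

end CommRing

section QCommute

variable {k R : Type*} [CommSemiring k] [Semiring R] [Algebra k R] {q : k} {a b : R}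

theorem pow_mul_of_mul_eq_smul_mul (h : b * a = q • (a * b)) (l : ℕ) :
    b ^ l * a = q ^ l • (a * b ^ l) := by
  induction l with
  | zero => simp only [pow_zero, one_mul, mul_one, one_smul]
  | succ l ih =>
    rw [pow_succ, mul_assoc, h, mul_smul_comm, ← mul_assoc, ih, smul_mul_assoc, smul_smul,
      ← pow_succ', mul_assoc]

theorem add_pow_of_mul_eq_smul_mul (h : b * a = q • (a * b)) (n : ℕ) :
    (a + b) ^ n = ∑ l ∈ Finset.range (n + 1), qBinom q n l • (a ^ (n - l) * b ^ l) := by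
  induction n with
  | zero => simp [qBinom_zero_right]
  | succ n ih =>
    have mul_a : (∑ l ∈ Finset.range (n + 1), qBinom q n l • (a ^ (n - l) * b ^ l)) * a =
        ∑ l ∈ Finset.range (n + 2), (q ^ l * qBinom q n l) • (a ^ (n + 1 - l) * b ^ l) := by
      rw [Finset.sum_range_succ _ (n + 1), qBinom_eq_zero_of_lt q n.lt_succ_self, mul_zero,
        zero_smul, add_zero, Finset.sum_mul]
      refine Finset.sum_congr rfl fun l hl => ?_
      rw [smul_mul_assoc, mul_assoc, pow_mul_of_mul_eq_smul_mul h, mul_smul_comm, smul_smul,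
        mul_comm (qBinom q n l), ← mul_assoc, ← pow_succ,
        Nat.sub_add_comm (Finset.mem_range_succ_iff.1 hl)]
    have mul_b : (∑ l ∈ Finset.range (n + 1), qBinom q n l • (a ^ (n - l) * b ^ l)) * b =
        ∑ l ∈ Finset.range (n + 1), qBinom q n l • (a ^ (n - l) * b ^ (l + 1)) := by
      simp only [Finset.sum_mul, smul_mul_assoc, mul_assoc, pow_succ]
    rw [pow_succ, ih, mul_add, mul_a, mul_b, Finset.sum_range_succ', add_right_comm,
      ← Finset.sum_add_distrib, Finset.sum_range_succ' _ (n + 1)]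
    simp only [qBinom_succ_succ, qBinom_zero_right, add_smul, Nat.add_sub_add_right, pow_zero,
      one_mul]

end QCommute

section TensorDiff

variable {k : Type*} [CommRing k] (u : kˣ)
  {U V : ℤ → Type*} [∀ i, AddCommGroup (U i)] [∀ i, Module k (U i)]
  [∀ i, AddCommGroup (V i)] [∀ i, Module k (V i)]
  (dU : ∀ i : ℤ, U i →ₗ[k] U (i + 1)) (dV : ∀ i : ℤ, V i →ₗ[k] V (i + 1))

local notation "ι" => DirectSum.lof k (ℤ × ℤ) (fun p : ℤ × ℤ => U (Prod.fst p) ⊗[k] V (Prod.snd p))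

variable (V) in
/-- The summand `d_U ⊗ 1` of the differential of `U ⊗^{•q} V`. -/
noncomputable def rTensorDiff :
    Module.End k (⨁ p : ℤ × ℤ, U p.1 ⊗[k] V p.2) :=
  DirectSum.toModule k (ℤ × ℤ) _ fun p => ι (p.1 + 1, p.2) ∘ₗ (dU p.1).rTensor (V p.2)

variable (U) in
/-- The summand `q^deg ⊗ d_V` of the differential of `U ⊗^{•q} V`, where `q = ↑u` and `deg` is the
degree of the left factor. -/
noncomputable def twistedLTensorDiff :
    Module.End k (⨁ p : ℤ × ℤ, U p.1 ⊗[k] V p.2) :=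
  DirectSum.toModule k (ℤ × ℤ) _ fun p =>
    ((u ^ p.1 : kˣ) : k) • ι (p.1, p.2 + 1) ∘ₗ (dV p.2).lTensor (U p.1)

theorem tensorDiff_eq_add :
    tensorDiff u U V dU dV = rTensorDiff V dU + twistedLTensorDiff u U dV := by
  refine DirectSum.linearMap_ext k fun p => TensorProduct.ext' fun x y => ?_
  simp [tensorDiff, rTensorDiff, twistedLTensorDiff]

theorem rTensorDiff_lof_tmul (s t : ℤ) (x : U s) (y : V t) :
    rTensorDiff V dU (ι (s, t) (x ⊗ₜ y)) = ι (s + 1, t) (dU s x ⊗ₜ y) :=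
  DirectSum.toModule_lof k (s, t) _

theorem twistedLTensorDiff_lof_tmul (s t : ℤ) (x : U s) (y : V t) :
    twistedLTensorDiff u U dV (ι (s, t) (x ⊗ₜ y)) =
      ((u ^ s : kˣ) : k) • ι (s, t + 1) (x ⊗ₜ dV t y) :=
  DirectSum.toModule_lof k (s, t) _

theorem twistedLTensorDiff_mul_rTensorDiff :
    twistedLTensorDiff u U dV * rTensorDiff V dU =
      (u : k) • (rTensorDiff V dU * twistedLTensorDiff u U dV) := by
  refine DirectSum.linearMap_ext k fun ⟨s, t⟩ => TensorProduct.ext' fun x y => ?_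
  simp only [LinearMap.comp_apply, LinearMap.smul_apply, Module.End.mul_apply,
    rTensorDiff_lof_tmul, twistedLTensorDiff_lof_tmul, map_smul, smul_smul]
  rw [zpow_add_one, mul_comm, Units.val_mul]

theorem lof_castLM_tmul_castLM {i i' j j' : ℤ} (h : i = i') (h' : j = j') (x : U i) (y : V j) :
    ι (i', j') (castLM (k := k) h x ⊗ₜ castLM (k := k) h' y) = ι (i, j) (x ⊗ₜ y) := by
  subst h h'
  rfl

theorem rTensorDiff_pow_lof_tmul (m : ℕ) (s t : ℤ) (x : U s) (y : V t) :
    (rTensorDiff V dU ^ m) (ι (s, t) (x ⊗ₜ y)) = ι (s + m, t) (dpow dU m s x ⊗ₜ y) := by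
  induction m generalizing s with
  | zero => exact (lof_castLM_tmul_castLM _ rfl x y).symm
  | succ m ih =>
    rw [pow_succ, Module.End.mul_apply, rTensorDiff_lof_tmul, ih]
    exact (lof_castLM_tmul_castLM _ rfl (dpow dU m (s + 1) (dU s x)) y).symm

theorem twistedLTensorDiff_pow_lof_tmul (l : ℕ) (s t : ℤ) (x : U s) (y : V t) :
    (twistedLTensorDiff u U dV ^ l) (ι (s, t) (x ⊗ₜ y)) =
      ((u ^ ((l : ℤ) * s) : kˣ) : k) • ι (s, t + l) (x ⊗ₜ dpow dV l t y) := by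
  induction l generalizing t with
  | zero =>
    have coeff : u ^ (((0 : ℕ) : ℤ) * s) = 1 := by rw [Nat.cast_zero, zero_mul, zpow_zero]
    rw [coeff, Units.val_one, one_smul]
    exact (lof_castLM_tmul_castLM rfl _ x y).symm
  | succ l ih =>
    have coeff : u ^ (((l + 1 : ℕ) : ℤ) * s) = u ^ s * u ^ ((l : ℤ) * s) := by
      rw [← zpow_add, Nat.cast_succ, add_one_mul, add_comm]
    rw [pow_succ, Module.End.mul_apply, twistedLTensorDiff_lof_tmul, map_smul, ih, smul_smul,
      ← Units.val_mul, ← coeff]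
    exact congrArg _ (lof_castLM_tmul_castLM rfl _ x (dpow dV l (t + 1) (dV t y))).symm

theorem tensorDiff_iterate_tmul_general (n : ℕ) (s t : ℤ) (x : U s) (y : V t) :
    (tensorDiff u U V dU dV ^ n) (ι (s, t) (x ⊗ₜ y)) =
      ∑ l ∈ Finset.range (n + 1), (((u ^ ((l : ℤ) * s) : kˣ) : k) * qBinom (u : k) n l) •
        ι (s + ((n - l : ℕ) : ℤ), t + (l : ℤ)) (dpow dU (n - l) s x ⊗ₜ dpow dV l t y) := by
  rw [tensorDiff_eq_add, add_pow_of_mul_eq_smul_mul (twistedLTensorDiff_mul_rTensorDiff u dU dV),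
    LinearMap.sum_apply]
  refine Finset.sum_congr rfl fun l _ => ?_
  rw [LinearMap.smul_apply, Module.End.mul_apply, twistedLTensorDiff_pow_lof_tmul, map_smul,
    rTensorDiff_pow_lof_tmul, smul_smul, mul_comm]

end TensorDiff

/-- for `u ∈ U^s`, `v ∈ V^t` and `1 ≤ n ≤ N`, the `n`-fold iterate of the
differential of `U ⊗^{•q} V` satisfies
`d^{(n)}(u⊗v) = Σ_{l=0}^{n} q^{ls} ⬝ [n choose l] ⬝ d_U^{(n−l)}(u) ⊗ d_V^{(l)}(v)`. -/
theorem tensorDiff_iterate_tmul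
    {k : Type*} [CommRing k] (N : ℕ) (hN : 2 ≤ N) (q : k)
    (hq1 : q ^ N = 1)
    (hq2 : ∀ l : ℕ, 1 ≤ l → l ≤ N - 1 → q ^ l - 1 ∈ nonZeroDivisors k)
    (u : kˣ) (hu : (u : k) = q)
    (U V : ℤ → Type*) [∀ i, AddCommGroup (U i)] [∀ i, Module k (U i)]
    [∀ i, AddCommGroup (V i)] [∀ i, Module k (V i)]
    (dU : ∀ i : ℤ, U i →ₗ[k] U (i + 1)) (dV : ∀ i : ℤ, V i →ₗ[k] V (i + 1))
    (n : ℕ) (hn1 : 1 ≤ n) (hnN : n ≤ N)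
    (c : ℕ → k) (hc : ∀ l ≤ n, QBinomSpec q N n l (c l))
    (s t : ℤ) (x : U s) (y : V t) :
    ((tensorDiff u U V dU dV) ^ n)
        (DirectSum.lof k (ℤ × ℤ) (fun p : ℤ × ℤ => U p.1 ⊗[k] V p.2) (s, t) (x ⊗ₜ[k] y)) =
      ∑ l ∈ Finset.range (n + 1),
        (((u ^ ((l : ℤ) * s) : kˣ) : k) * c l) •
          DirectSum.lof k (ℤ × ℤ) (fun p : ℤ × ℤ => U p.1 ⊗[k] V p.2)
            (s + ((n - l : ℕ) : ℤ), t + (l : ℤ))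
            ((dpow dU (n - l) s x) ⊗ₜ[k] (dpow dV l t y)) := by
  subst hu
  have hfact : ∀ j < N, qFact (u : k) j ∈ nonZeroDivisors k := fun j hj =>
    qFact_mem_nonZeroDivisors fun l h1 hl => hq2 l h1 (by lia)
  rw [tensorDiff_iterate_tmul_general]
  refine Finset.sum_congr rfl fun l hl => ?_
  have hln : l ≤ n := Finset.mem_range_succ_iff.1 hl
  rw [(hc l hln).eq_qBinom hfact hnN hln]
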